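/- arXiv:1104.1540 — 2 statements merged into one kernel-verified Lean document; each statement's English description precedes it below -/
import Mathlib

section
/- Let A be a Timed Büchi Automaton with region graph RG(A). Every infinite path in RG(A) starting from the node (q0,r0), where r0 is the region of the zero valuation, is an abstraction of a run of A. The same statement holds for the d-region graph RG^d(A). -/
/-!
The proof is the time-abstract bisimulation argument. If `v ≅_M w` and `v` lets time `d` elapse,
then some delay `d'` makes `w + d'` equivalent to `v + d`: take the integer part of `d'` to be that
of `d`, and choose its fractional part so that it sits among the numbers `1 - fract (w x)` exactly
as `fract d` sits among the numbers `1 - fract (v x)`, for the clocks `x` that are at most `M`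
(`exists_fract_delay`, `RegEquiv.exists_delay`). Equivalent valuations satisfy the same guards and
stay equivalent after resets, so a run can be lifted along the path step by step
(`lift_path`).

The clock set is not assumed finite, so the choice of the fractional part needs another source of
finiteness: a run from the zero valuation only meets valuations taking finitely many values, since
a delay keeps their number and a reset adds at most the value `0`.

For d-regions, `≅^d_M` refines `≅_M` (`DRegEquiv.regEquiv`), and a delay leaves differences of
clocks unchanged, so the delay chosen for `≅_M` also works for `≅^d_M`.
-/

/-! ## Framework for Timed Büchi Automata -/

/-- Comparison operators `<, ≤, =, ≥, >` used in clock constraints. -/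
inductive CmpOp where
  | lt | le | eq | ge | gt

def CmpOp.sat : CmpOp → ℝ → ℝ → Prop
  | .lt, a, b => a < b
  | .le, a, b => a ≤ b
  | .eq, a, b => a = b
  | .ge, a, b => a ≥ b
  | .gt, a, b => a > b

/-- A clock valuation assigns a non-negative real to every clock. -/
abbrev ClockVal (X : Type) := X → NNReal

/-- An atomic clock constraint `x # c`. -/
structure AtomicConstraint (X : Type) where
  clock : X
  cmp : CmpOp
  bound : ℕ

/-- A guard is a finite conjunction of atomic constraints. -/
abbrev Guard (X : Type) := List (AtomicConstraint X)

def Guard.sat {X : Type} (g : Guard X) (v : ClockVal X) : Prop :=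
  ∀ c ∈ g, CmpOp.sat c.cmp (v c.clock : ℝ) (c.bound : ℝ)

/-- A transition `(q, g, R, q')` of a timed automaton. -/
structure TBATrans (Q X : Type) where
  src : Q
  guard : Guard X
  reset : Set X
  dst : Q

/-- A Timed Büchi Automaton with states `Q` and clocks `X`. -/
structure TBA (Q X : Type) where
  q0 : Q
  trans : Set (TBATrans Q X)
  acc : Set Q

/-- Time elapse: `(ν+δ)(x) = ν(x)+δ`. -/
def ClockVal.add {X : Type} (v : ClockVal X) (d : NNReal) : ClockVal X := fun x => v x + d

open Classical in
/-- `[R]ν` sets clocks in `R` to `0` and leaves others unchanged. -/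
noncomputable def resetVal {X : Type} (R : Set X) (v : ClockVal X) : ClockVal X :=
  fun x => if x ∈ R then 0 else v x

/-- The valuation assigning `0` to every clock. -/
def zeroVal (X : Type) : ClockVal X := fun _ => 0

/-- `(q,ν) →^{δ,t} (q',ν')`. -/
def TBA.Step {Q X : Type} (A : TBA Q X) (t : TBATrans Q X) (d : NNReal)
    (c c' : Q × ClockVal X) : Prop :=
  t ∈ A.trans ∧ t.src = c.1 ∧ t.dst = c'.1 ∧
    Guard.sat t.guard (ClockVal.add c.2 d) ∧ c'.2 = resetVal t.reset (ClockVal.add c.2 d)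

/-- A run of `A` given by its configurations, delays and transitions. -/
def IsRun {Q X : Type} (A : TBA Q X) (st : ℕ → Q × ClockVal X) (ds : ℕ → NNReal)
    (ts : ℕ → TBATrans Q X) : Prop :=
  st 0 = (A.q0, zeroVal X) ∧ ∀ i, A.Step (ts i) (ds i) (st i) (st (i + 1))

/-- The run visits accepting states infinitely often. -/
def BuchiRun {Q X : Type} (A : TBA Q X) (st : ℕ → Q × ClockVal X) : Prop :=
  {i | (st i).1 ∈ A.acc}.Infinite

/-- A sequence of delays is non-Zeno when its total duration is infinite. -/
def NonZeno (ds : ℕ → NNReal) : Prop := (∑' i, (ds i : ENNReal)) = ⊤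

def TBA.BoundsConsts {Q X : Type} (A : TBA Q X) (M : ℕ) : Prop :=
  ∀ t ∈ A.trans, ∀ c ∈ t.guard, c.bound ≤ M

/-- `M` is the maximal constant appearing in the guards of `A`
(`M = 0` when there is no constraint at all). -/
def TBA.IsMaxConst {Q X : Type} (A : TBA Q X) (M : ℕ) : Prop :=
  A.BoundsConsts M ∧ (M = 0 ∨ ∃ t ∈ A.trans, ∃ c ∈ t.guard, c.bound = M)

/-! ## Regions -/

/-- Region equivalence `ν ≅_M ν'`. -/
def RegEquiv {X : Type} (M : ℕ) (v v' : ClockVal X) : Prop :=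
  ∀ x y : X,
    (((M : ℝ) < (v x : ℝ)) ↔ ((M : ℝ) < (v' x : ℝ))) ∧
    ((v x : ℝ) ≤ M → ⌊(v x : ℝ)⌋ = ⌊(v' x : ℝ)⌋) ∧
    ((v x : ℝ) ≤ M → (Int.fract (v x : ℝ) = 0 ↔ Int.fract (v' x : ℝ) = 0)) ∧
    ((v x : ℝ) ≤ M → (v y : ℝ) ≤ M →
      (Int.fract (v x : ℝ) ≤ Int.fract (v y : ℝ) ↔
        Int.fract (v' x : ℝ) ≤ Int.fract (v' y : ℝ)))

/-- Diagonal region equivalence `ν ≅^d_M ν'`. -/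
def DRegEquiv {X : Type} (M : ℕ) (v v' : ClockVal X) : Prop :=
  (∀ x : X,
    (((M : ℝ) < (v x : ℝ)) ↔ ((M : ℝ) < (v' x : ℝ))) ∧
    ((v x : ℝ) ≤ M → ⌊(v x : ℝ)⌋ = ⌊(v' x : ℝ)⌋) ∧
    ((v x : ℝ) ≤ M → (Int.fract (v x : ℝ) = 0 ↔ Int.fract (v' x : ℝ) = 0))) ∧
  (∀ x y : X, ∀ c : ℤ, -(M : ℤ) < c → c < (M : ℤ) →
    ((v x : ℝ) - (v y : ℝ) ≤ (c : ℝ) ↔ (v' x : ℝ) - (v' y : ℝ) ≤ (c : ℝ)))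

/-- `r` is an equivalence class of the relation `E`. -/
def EqClass {X : Type} (E : ClockVal X → ClockVal X → Prop) (r : Set (ClockVal X)) : Prop :=
  ∃ v, r = {v' | E v v'}

/-- Nodes of region/simulation/zone graphs: a state paired with a set of valuations. -/
abbrev RNode (Q X : Type) := Q × Set (ClockVal X)

/-- A transition `(q,r) →^t (q',r')` of the region graph built on the equivalence `E`. -/
def RGTrans {Q X : Type} (A : TBA Q X) (E : ClockVal X → ClockVal X → Prop)
    (t : TBATrans Q X) (n n' : RNode Q X) : Prop :=
  EqClass E n.2 ∧ EqClass E n'.2 ∧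
    ∃ v ∈ n.2, ∃ d : NNReal, ∃ v' ∈ n'.2, A.Step t d (n.1, v) (n'.1, v')

def PreStable {Q X : Type} (A : TBA Q X) (t : TBATrans Q X) (n n' : RNode Q X) : Prop :=
  ∀ v ∈ n.2, ∃ v' ∈ n'.2, ∃ d : NNReal, A.Step t d (n.1, v) (n'.1, v')

def PostStable {Q X : Type} (A : TBA Q X) (t : TBATrans Q X) (n n' : RNode Q X) : Prop :=
  ∀ v' ∈ n'.2, ∃ v ∈ n.2, ∃ d : NNReal, A.Step t d (n.1, v) (n'.1, v')

/-- A progressive path: every clock is either eventually always above `M`,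
or is both reset and strictly positive infinitely often. -/
def Progressive {Q X : Type} (M : ℕ) (nodes : ℕ → RNode Q X) : Prop :=
  ∀ x : X,
    (∃ n : ℕ, ∀ i > n, ∀ v ∈ (nodes i).2, (M : ℝ) < (v x : ℝ)) ∨
    (∀ n : ℕ, (∃ i > n, ∀ v ∈ (nodes i).2, v x = 0) ∧
              (∃ j > n, ∀ v ∈ (nodes j).2, 0 < v x))

/-! ## Zones and abstraction operators -/

inductive ZoneConstraint (X : Type) where
  | single (x : X) (cmp : CmpOp) (c : ℕ)
  | diff (x y : X) (cmp : CmpOp) (c : ℕ)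

def ZoneConstraint.sat {X : Type} : ZoneConstraint X → ClockVal X → Prop
  | .single x cmp c, v => CmpOp.sat cmp (v x : ℝ) (c : ℝ)
  | .diff x y cmp c, v => CmpOp.sat cmp ((v x : ℝ) - (v y : ℝ)) (c : ℝ)

/-- A zone: a set of valuations definable by a finite conjunction of constraints
`x # c` or `x − y # c`. -/
def IsZone {X : Type} (Z : Set (ClockVal X)) : Prop :=
  ∃ l : List (ZoneConstraint X), Z = {v | ∀ c ∈ l, ZoneConstraint.sat c v}

/-- `Closure_M(Z)`: smallest union of regions containing `Z`. -/
def closureR {X : Type} (M : ℕ) (Z : Set (ClockVal X)) : Set (ClockVal X) :=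
  {v' | ∃ v ∈ Z, RegEquiv M v v'}

/-- `Closure^d_M(Z)`: smallest union of d-regions containing `Z`. -/
def closureD {X : Type} (M : ℕ) (Z : Set (ClockVal X)) : Set (ClockVal X) :=
  {v' | ∃ v ∈ Z, DRegEquiv M v v'}

/-- `S` is a union of equivalence classes of `E`. -/
def UnionOfClasses {X : Type} (E : ClockVal X → ClockVal X → Prop)
    (S : Set (ClockVal X)) : Prop :=
  ∀ v ∈ S, ∀ v', E v v' → v' ∈ S

/-- Convexity for sets of clock valuations. -/
def ConvexVal {X : Type} (S : Set (ClockVal X)) : Prop :=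
  ∀ u ∈ S, ∀ w ∈ S, ∀ θ : NNReal, θ ≤ 1 →
    (fun x => θ * u x + (1 - θ) * w x) ∈ S

/-- `Approx_M(Z)`: smallest convex union of d-regions containing `Z`. -/
def approxZ {X : Type} (M : ℕ) (Z : Set (ClockVal X)) : Set (ClockVal X) :=
  ⋂₀ {S | Z ⊆ S ∧ ConvexVal S ∧ UnionOfClasses (DRegEquiv M) S}

/-! ## Simulation graphs and the zone graph -/

/-- `{ν' | ∃ ν ∈ S, δ ≥ 0, (q,ν) →^{δ,t} (q',ν')}`. -/
def postSet {Q X : Type} (A : TBA Q X) (t : TBATrans Q X) (q : Q)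
    (S : Set (ClockVal X)) (q' : Q) : Set (ClockVal X) :=
  {v' | ∃ v ∈ S, ∃ d : NNReal, A.Step t d (q, v) (q', v')}

/-- Transition of the simulation graph built with abstraction operator `op`. -/
def SGTrans {Q X : Type} (A : TBA Q X) (op : Set (ClockVal X) → Set (ClockVal X))
    (t : TBATrans Q X) (n n' : RNode Q X) : Prop :=
  (postSet A t n.1 n.2 n'.1).Nonempty ∧ n'.2 = op (postSet A t n.1 n.2 n'.1)

/-- Initial node `(q0, {ν0})` of the simulation/zone graphs. -/
def ZGInit {Q X : Type} (A : TBA Q X) : RNode Q X := (A.q0, {zeroVal X})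

/-- A step of the zone graph `ZG^a(A)` (simulation graph with `Approx_M`). -/
def ZGStep {Q X : Type} (A : TBA Q X) (M : ℕ) (n n' : RNode Q X) : Prop :=
  ∃ t, SGTrans A (approxZ M) t n n'

/-- Nodes of `ZG^a(A)` reachable from the initial node. -/
def ZGReach {Q X : Type} (A : TBA Q X) (M : ℕ) : Set (RNode Q X) :=
  {n | Relation.ReflTransGen (ZGStep A M) (ZGInit A) n}

/-! ## Bounded, lower-bounded, reset and zero-checked clocks -/

/-- Clock `x` is bounded by transition `t` taken from the set of valuations `Z`. -/
def BoundsClock {Q X : Type} (t : TBATrans Q X) (Z : Set (ClockVal X)) (x : X) : Prop :=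
  ∃ c : ℕ, ∀ v ∈ Z, ∀ d : NNReal, Guard.sat t.guard (ClockVal.add v d) →
    ((ClockVal.add v d) x : ℝ) ≤ c

/-- The guard of `t`, taken from `Z`, implies `x ≥ 1`. -/
def LowerBoundsClock {Q X : Type} (t : TBATrans Q X) (Z : Set (ClockVal X)) (x : X) : Prop :=
  ∀ v ∈ Z, ∀ d : NNReal, Guard.sat t.guard (ClockVal.add v d) →
    (1 : ℝ) ≤ ((ClockVal.add v d) x : ℝ)

/-- Transition `t` taken from `Z` is a zero-check. -/
def ZeroCheck {Q X : Type} (t : TBATrans Q X) (Z : Set (ClockVal X)) : Prop :=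
  ∃ x : X, ∀ v ∈ Z, ∀ d : NNReal, Guard.sat t.guard (ClockVal.add v d) →
    (ClockVal.add v d) x = 0

/-- A path of the zone graph is blocked if some clock is bounded infinitely often
but reset only finitely often. -/
def ZBlocked {Q X : Type} (nodes : ℕ → RNode Q X) (ts : ℕ → TBATrans Q X) : Prop :=
  ∃ x : X, {i | BoundsClock (ts i) (nodes i).2 x}.Infinite ∧
           {i | x ∈ (ts i).reset}.Finite

/-! ## The guessing zone graph -/

/-- Nodes `(q, Z, Y)` of the guessing zone graph. -/
abbrev GNode (Q X : Type) := Q × Set (ClockVal X) × Set X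

/-- Transitions of `GZG^a(A)`: `some t` is an action transition,
`none` is the auxiliary letter `τ`. -/
def GZGTrans {Q X : Type} (A : TBA Q X) (M : ℕ) :
    Option (TBATrans Q X) → GNode Q X → GNode Q X → Prop
  | some t, n, n' =>
      SGTrans A (approxZ M) t (n.1, n.2.1) (n'.1, n'.2.1) ∧
      n'.2.2 = n.2.2 ∪ t.reset ∧
      ∃ v ∈ n.2.1, ∃ d : NNReal, ∃ v' ∈ n'.2.1,
        (∀ x, x ∉ n.2.2 → 0 < (ClockVal.add v d) x) ∧
        A.Step t d (n.1, v) (n'.1, v')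
  | none, n, n' => n'.1 = n.1 ∧ n'.2.1 = n.2.1 ∧ (n'.2.2 = (∅ : Set X) ∨ n'.2.2 = n.2.2)

/-- Initial node `(q0, {ν0}, X)` of `GZG^a(A)`. -/
def GZGInit {Q X : Type} (A : TBA Q X) : GNode Q X := (A.q0, {zeroVal X}, Set.univ)

def GZGStep {Q X : Type} (A : TBA Q X) (M : ℕ) (n n' : GNode Q X) : Prop :=
  ∃ l, GZGTrans A M l n n'

/-- Nodes of `GZG^a(A)` reachable from the initial node. -/
def GZGReach {Q X : Type} (A : TBA Q X) (M : ℕ) : Set (GNode Q X) :=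
  {n | Relation.ReflTransGen (GZGStep A M) (GZGInit A) n}

/-- A path of the guessing zone graph is blocked if some clock is bounded by
infinitely many of its transitions but reset by only finitely many. -/
def GBlocked {Q X : Type} (nodes : ℕ → GNode Q X)
    (labels : ℕ → Option (TBATrans Q X)) : Prop :=
  ∃ x : X,
    {i | ∃ t, labels i = some t ∧ BoundsClock t (nodes i).2.1 x}.Infinite ∧
    {i | ∃ t, labels i = some t ∧ x ∈ t.reset}.Finite

/-! ## Clock orders -/

/-- `Z` orders clocks. -/
def OrdersClocks {X : Type} (Z : Set (ClockVal X)) : Prop :=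
  ∀ x y : X, (∀ v ∈ Z, v x ≤ v y) ∨ (∀ v ∈ Z, v y ≤ v x)

/-- `Y` respects the order given by `Z`: it is downward closed w.r.t. it. -/
def RespectsOrder {X : Type} (Z : Set (ClockVal X)) (Y : Set X) : Prop :=
  ∀ y ∈ Y, ∀ x : X, (∀ v ∈ Z, v x ≤ v y) → x ∈ Y

/-! ## Strongly connected components -/

def StepWithin {N : Type} (Γ : Set N) (step : N → N → Prop) (a b : N) : Prop :=
  a ∈ Γ ∧ b ∈ Γ ∧ step a b

/-- `Γ` is an SCC of the graph with edge relation `step`: every node of `Γ` is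
reachable from every other node of `Γ` within `Γ`. -/
def IsSCC {N : Type} (step : N → N → Prop) (Γ : Set N) : Prop :=
  Γ.Nonempty ∧ ∀ a ∈ Γ, ∀ b ∈ Γ, Relation.ReflTransGen (StepWithin Γ step) a b

/-- `U_Γ`: clocks bounded by some transition of the SCC `Γ` of `GZG^a(A)`. -/
def GZGBoundedClocks {Q X : Type} (A : TBA Q X) (M : ℕ) (Γ : Set (GNode Q X)) : Set X :=
  {x | ∃ n ∈ Γ, ∃ n' ∈ Γ, ∃ t, GZGTrans A M (some t) n n' ∧ BoundsClock t n.2.1 x}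

/-- `R_Γ`: clocks reset by some transition of the SCC `Γ` of `GZG^a(A)`. -/
def GZGResetClocks {Q X : Type} (A : TBA Q X) (M : ℕ) (Γ : Set (GNode Q X)) : Set X :=
  {x | ∃ n ∈ Γ, ∃ n' ∈ Γ, ∃ t, GZGTrans A M (some t) n n' ∧ x ∈ t.reset}

/-! ## The strongly non-Zeno construction -/

def liftConstraint {X : Type} (c : AtomicConstraint X) : AtomicConstraint (Option X) :=
  ⟨some c.clock, c.cmp, c.bound⟩

def liftGuard {X : Type} (g : Guard X) : Guard (Option X) := g.map liftConstraint

/-- `SNZ(A)`: a fresh clock `z` (`none`) is added; every accepting state `a` is split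
into an accepting copy `a1` (`Sum.inr a`) reachable only with `z ≥ 1` and resetting `z`,
and a non-accepting copy `a2` (`Sum.inl a`). -/
def SNZ {Q X : Type} (A : TBA Q X) : TBA (Q ⊕ Q) (Option X) where
  q0 := Sum.inl A.q0
  trans :=
    {t' | ∃ t ∈ A.trans,
        t' = ⟨Sum.inl t.src, liftGuard t.guard, some '' t.reset, Sum.inl t.dst⟩} ∪
    {t' | ∃ t ∈ A.trans, t.dst ∈ A.acc ∧
        t' = ⟨Sum.inl t.src, ⟨none, CmpOp.ge, 1⟩ :: liftGuard t.guard,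
              insert none (some '' t.reset), Sum.inr t.dst⟩} ∪
    {t' | ∃ a ∈ A.acc, t' = ⟨Sum.inr a, [], ∅, Sum.inl a⟩}
  acc := Sum.inr '' A.acc

/-! ## Trapped runs and the restricted guessing zone graph -/

/-- A run of `A` is trapped in the SCC `Γ` of `ZG^a(A)`: some suffix of the run
instantiates a path lying within `Γ`. -/
def TrappedIn {Q X : Type} (A : TBA Q X) (M : ℕ) (Γ : Set (RNode Q X))
    (st : ℕ → Q × ClockVal X) (ts : ℕ → TBATrans Q X) : Prop :=
  ∃ m : ℕ, ∃ nodes : ℕ → RNode Q X,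
    (∀ i, nodes i ∈ Γ) ∧
    (∀ i, SGTrans A (approxZ M) (ts (m + i)) (nodes i) (nodes (i + 1))) ∧
    (∀ i, (st (m + i)).1 = (nodes i).1 ∧ (st (m + i)).2 ∈ (nodes i).2)

/-- Steps of `GZG^a(A)` whose endpoints project into `Γ`. -/
def GZGRestStep {Q X : Type} (A : TBA Q X) (M : ℕ) (Γ : Set (RNode Q X))
    (g g' : GNode Q X) : Prop :=
  (g.1, g.2.1) ∈ Γ ∧ (g'.1, g'.2.1) ∈ Γ ∧ GZGStep A M g g'

/-- Nodes of `GZG^a_{|Γ}(A)`: reachable from `(q^Γ, Z^Γ, X)` via steps projecting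
into `Γ`. -/
def GZGRestNodes {Q X : Type} (A : TBA Q X) (M : ℕ) (Γ : Set (RNode Q X))
    (root : RNode Q X) : Set (GNode Q X) :=
  {g | Relation.ReflTransGen (GZGRestStep A M Γ) (root.1, root.2, Set.univ) g}

/-! ### Equivalence of single clock values -/

/-- The part of both region equivalences that concerns one clock with values `a` and `b`. -/
def ValEquiv (M : ℕ) (a b : ℝ) : Prop :=
  ((M : ℝ) < a ↔ (M : ℝ) < b) ∧ (a ≤ M → ⌊a⌋ = ⌊b⌋) ∧
    (a ≤ M → (Int.fract a = 0 ↔ Int.fract b = 0))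

lemma ValEquiv.le_iff {M : ℕ} {a b : ℝ} (h : ValEquiv M a b) : a ≤ M ↔ b ≤ M := by
  rw [← not_lt, ← not_lt, h.1]

lemma ValEquiv.symm {M : ℕ} {a b : ℝ} (h : ValEquiv M a b) : ValEquiv M b a :=
  ⟨h.1.symm, fun hb => (h.2.1 (h.le_iff.2 hb)).symm, fun hb => (h.2.2 (h.le_iff.2 hb)).symm⟩

lemma ValEquiv.trans {M : ℕ} {a b c : ℝ} (h : ValEquiv M a b) (h' : ValEquiv M b c) :
    ValEquiv M a c :=
  ⟨h.1.trans h'.1, fun ha => (h.2.1 ha).trans (h'.2.1 (h.le_iff.1 ha)),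
    fun ha => (h.2.2 ha).trans (h'.2.2 (h.le_iff.1 ha))⟩

lemma ValEquiv.refl (M : ℕ) (a : ℝ) : ValEquiv M a a := ⟨Iff.rfl, fun _ => rfl, fun _ => Iff.rfl⟩

lemma le_int_iff (a : ℝ) (c : ℤ) : a ≤ c ↔ ⌊a⌋ < c ∨ (⌊a⌋ = c ∧ Int.fract a = 0) := by
  rw [le_iff_lt_or_eq, Int.floor_lt]
  refine or_congr Iff.rfl ⟨?_, ?_⟩
  · rintro rfl; simp
  · rintro ⟨h1, h2⟩
    have := Int.floor_add_fract a
    rw [h1, h2] at this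
    simpa using this.symm

/-- Equal integer parts and simultaneously vanishing fractional parts give `ValEquiv`. -/
lemma ValEquiv.of_floor {M : ℕ} {a b : ℝ} (h1 : ⌊a⌋ = ⌊b⌋)
    (h2 : Int.fract a = 0 ↔ Int.fract b = 0) : ValEquiv M a b := by
  refine ⟨?_, fun _ => h1, fun _ => h2⟩
  have ha := le_int_iff a M
  have hb := le_int_iff b M
  rw [h1, h2, ← hb] at ha
  rw [← not_le, ← not_le]
  exact not_congr (by exact_mod_cast ha)

lemma ValEquiv.lt_int {M : ℕ} {a b : ℝ} (h : ValEquiv M a b) {c : ℤ} (hc : c ≤ M) :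
    a < c ↔ b < c := by
  have hc' : (c : ℝ) ≤ M := by exact_mod_cast hc
  by_cases ha : a ≤ M
  · rw [← Int.floor_lt, ← Int.floor_lt, h.2.1 ha]
  · have hb : ¬ b ≤ M := fun hb => ha (h.le_iff.2 hb)
    constructor <;> intro <;> linarith

lemma ValEquiv.le_int {M : ℕ} {a b : ℝ} (h : ValEquiv M a b) {c : ℤ} (hc : c ≤ M) :
    a ≤ c ↔ b ≤ c := by
  have hc' : (c : ℝ) ≤ M := by exact_mod_cast hc
  by_cases ha : a ≤ M
  · rw [le_int_iff, le_int_iff b, h.2.1 ha, h.2.2 ha]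
  · have hb : ¬ b ≤ M := fun hb => ha (h.le_iff.2 hb)
    constructor <;> intro <;> linarith

lemma guard_sat_of_valEquiv {X : Type} {M : ℕ} {g : Guard X} {v w : ClockVal X}
    (hg : ∀ c ∈ g, c.bound ≤ M) (h : ∀ x, ValEquiv M (v x) (w x)) (hv : Guard.sat g v) :
    Guard.sat g w := by
  intro c hc
  have hb : (c.bound : ℤ) ≤ M := by exact_mod_cast hg c hc
  have hl := (h c.clock).lt_int hb
  have hle := (h c.clock).le_int hb
  simp only [Int.cast_natCast] at hl hle
  have := hv c hc
  obtain ⟨x, op, k⟩ := c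
  cases op <;> simp only [CmpOp.sat, ge_iff_le, gt_iff_lt] at this ⊢
  · exact hl.1 this
  · exact hle.1 this
  · exact le_antisymm (hle.1 this.le) (not_lt.1 fun h' => absurd (hl.2 h') (not_lt.2 this.ge))
  · exact not_lt.1 fun h' => absurd (hl.2 h') (not_lt.2 this)
  · exact not_le.1 fun h' => absurd (hle.2 h') (not_le.2 this)

/-! ### The two region equivalences -/

lemma regEquiv_iff {X : Type} {M : ℕ} {v w : ClockVal X} :
    RegEquiv M v w ↔ (∀ x, ValEquiv M (v x) (w x)) ∧
      ∀ x y, (v x : ℝ) ≤ M → (v y : ℝ) ≤ M →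
        (Int.fract (v x : ℝ) ≤ Int.fract (v y : ℝ) ↔
          Int.fract (w x : ℝ) ≤ Int.fract (w y : ℝ)) :=
  ⟨fun h => ⟨fun x => ⟨(h x x).1, (h x x).2.1, (h x x).2.2.1⟩, fun x y => (h x y).2.2.2⟩,
    fun h x y => ⟨(h.1 x).1, (h.1 x).2.1, (h.1 x).2.2, h.2 x y⟩⟩

lemma RegEquiv.refl {X : Type} (M : ℕ) (v : ClockVal X) : RegEquiv M v v :=
  regEquiv_iff.2 ⟨fun _ => .refl _ _, fun _ _ _ _ => Iff.rfl⟩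

lemma RegEquiv.symm {X : Type} {M : ℕ} {v w : ClockVal X} (h : RegEquiv M v w) :
    RegEquiv M w v := by
  rw [regEquiv_iff] at h ⊢
  exact ⟨fun x => (h.1 x).symm, fun x y hx hy =>
    (h.2 x y ((h.1 x).le_iff.2 hx) ((h.1 y).le_iff.2 hy)).symm⟩

lemma RegEquiv.trans {X : Type} {M : ℕ} {u v w : ClockVal X} (h : RegEquiv M u v)
    (h' : RegEquiv M v w) : RegEquiv M u w := by
  rw [regEquiv_iff] at h h' ⊢
  exact ⟨fun x => (h.1 x).trans (h'.1 x), fun x y hx hy =>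
    (h.2 x y hx hy).trans (h'.2 x y ((h.1 x).le_iff.1 hx) ((h.1 y).le_iff.1 hy))⟩

lemma DRegEquiv.refl {X : Type} (M : ℕ) (v : ClockVal X) : DRegEquiv M v v :=
  ⟨fun _ => ValEquiv.refl _ _, fun _ _ _ _ _ => Iff.rfl⟩

lemma DRegEquiv.symm {X : Type} {M : ℕ} {v w : ClockVal X} (h : DRegEquiv M v w) :
    DRegEquiv M w v :=
  ⟨fun x => ValEquiv.symm (h.1 x), fun x y c h1 h2 => (h.2 x y c h1 h2).symm⟩

lemma DRegEquiv.trans {X : Type} {M : ℕ} {u v w : ClockVal X} (h : DRegEquiv M u v)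
    (h' : DRegEquiv M v w) : DRegEquiv M u w :=
  ⟨fun x => ValEquiv.trans (h.1 x) (h'.1 x),
    fun x y c h1 h2 => (h.2 x y c h1 h2).trans (h'.2 x y c h1 h2)⟩

lemma fract_le_fract_iff (a b : ℝ) :
    Int.fract a ≤ Int.fract b ↔ a - b ≤ ((⌊a⌋ - ⌊b⌋ : ℤ) : ℝ) := by
  push_cast
  rw [← Int.self_sub_floor, ← Int.self_sub_floor]
  constructor <;> intro h <;> linarith

/-- The comparison of fractional parts of clocks `x, y ≤ M` is the comparison of `v x - v y` with
`⌊v x⌋ - ⌊v y⌋`. In the extreme cases `±M`, not covered by the diagonal constraints, the clock of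
integer part `M` has fractional part `0`, and single-clock information suffices. -/
lemma DRegEquiv.regEquiv {X : Type} {M : ℕ} {v w : ClockVal X} (h : DRegEquiv M v w) :
    RegEquiv M v w := by
  rw [regEquiv_iff]
  refine ⟨h.1, fun x y hx hy => ?_⟩
  have hX : ValEquiv M (v x) (w x) := h.1 x
  have hY : ValEquiv M (v y) (w y) := h.1 y
  have fx := hX.2.1 hx
  have fy := hY.2.1 hy
  have zx := hX.2.2 hx
  have zy := hY.2.2 hy
  have x0 : 0 ≤ ⌊(v x : ℝ)⌋ := Int.floor_nonneg.2 (v x).2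
  have y0 : 0 ≤ ⌊(v y : ℝ)⌋ := Int.floor_nonneg.2 (v y).2
  have hx' := (le_int_iff (v x) M).1 (by exact_mod_cast hx)
  have hy' := (le_int_iff (v y) M).1 (by exact_mod_cast hy)
  by_cases h1 : Int.fract (v x : ℝ) = 0
  · rw [h1, zx.1 h1]
    simp [Int.fract_nonneg]
  by_cases h2 : Int.fract (v y : ℝ) = 0
  · rw [h2, zy.1 h2, (Int.fract_nonneg _).ge_iff_eq', (Int.fract_nonneg _).ge_iff_eq']
    exact ⟨fun h => zx.1 h, fun h => zx.2 h⟩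
  have hx2 : ⌊(v x : ℝ)⌋ < M := hx'.resolve_right fun h => h1 h.2
  have hy2 : ⌊(v y : ℝ)⌋ < M := hy'.resolve_right fun h => h2 h.2
  rw [fract_le_fract_iff, fract_le_fract_iff, ← fx, ← fy]
  exact h.2 x y _ (by omega) (by omega)

/-! ### Resets -/

lemma resetVal_of_mem {X : Type} {R : Set X} {v : ClockVal X} {x : X} (h : x ∈ R) :
    resetVal R v x = 0 := by simp [resetVal, h]

lemma resetVal_of_notMem {X : Type} {R : Set X} {v : ClockVal X} {x : X} (h : x ∉ R) :
    resetVal R v x = v x := by simp [resetVal, h]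

lemma valEquiv_reset {X : Type} {M : ℕ} {v w : ClockVal X} (R : Set X)
    (h : ∀ x, ValEquiv M (v x) (w x)) (x : X) :
    ValEquiv M (resetVal R v x) (resetVal R w x) := by
  by_cases hx : x ∈ R
  · rw [resetVal_of_mem hx, resetVal_of_mem hx]; exact .refl _ _
  · rw [resetVal_of_notMem hx, resetVal_of_notMem hx]; exact h x

lemma RegEquiv.reset {X : Type} {M : ℕ} {v w : ClockVal X} (R : Set X) (h : RegEquiv M v w) :
    RegEquiv M (resetVal R v) (resetVal R w) := by
  rw [regEquiv_iff] at h ⊢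
  refine ⟨valEquiv_reset R h.1, fun x y => ?_⟩
  by_cases hx : x ∈ R
  · rw [resetVal_of_mem hx, resetVal_of_mem hx]
    simp [Int.fract_nonneg]
  rw [resetVal_of_notMem hx, resetVal_of_notMem hx]
  by_cases hy : y ∈ R
  · rw [resetVal_of_mem hy, resetVal_of_mem hy]
    intro h1 _
    have := (h.1 x).2.2 h1
    simp only [NNReal.coe_zero, Int.fract_zero]
    rw [(Int.fract_nonneg _).ge_iff_eq', (Int.fract_nonneg _).ge_iff_eq']
    exact ⟨fun h => this.1 h, fun h => this.2 h⟩
  · rw [resetVal_of_notMem hy, resetVal_of_notMem hy]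
    exact h.2 x y

lemma DRegEquiv.reset {X : Type} {M : ℕ} {v w : ClockVal X} (R : Set X) (h : DRegEquiv M v w) :
    DRegEquiv M (resetVal R v) (resetVal R w) := by
  refine ⟨valEquiv_reset R h.1, fun x y c h1 h2 => ?_⟩
  by_cases hx : x ∈ R <;> by_cases hy : y ∈ R
  · rw [resetVal_of_mem hx, resetVal_of_mem hx, resetVal_of_mem hy, resetVal_of_mem hy]
  · rw [resetVal_of_mem hx, resetVal_of_mem hx, resetVal_of_notMem hy, resetVal_of_notMem hy]
    have := (show ValEquiv M (v y) (w y) from h.1 y).lt_int (c := -c) (by omega)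
    have := not_congr this
    push_cast at this
    rw [not_lt, not_lt] at this
    simp only [NNReal.coe_zero, zero_sub]
    rw [neg_le, neg_le (a := (w y : ℝ))]
    exact this
  · rw [resetVal_of_notMem hx, resetVal_of_notMem hx, resetVal_of_mem hy, resetVal_of_mem hy]
    have := (show ValEquiv M (v x) (w x) from h.1 x).le_int (c := c) h2.le
    simpa using this
  · rw [resetVal_of_notMem hx, resetVal_of_notMem hx, resetVal_of_notMem hy,
      resetVal_of_notMem hy]
    exact h.2 x y c h1 h2

/-! ### Matching delays -/

/-- The choice of the fractional part `f'` of the matching delay: if the fractional parts `a x` and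
`b x` of the relevant clocks are ordered alike and vanish simultaneously, then `f'` can be chosen so
that `a x + f` and `b x + f'` always compare in the same way to `1`. -/
lemma exists_fract_delay {ι : Type} {a b : ι → ℝ} (ha : ∀ x, 0 ≤ a x ∧ a x < 1)
    (hb : ∀ x, 0 ≤ b x ∧ b x < 1) (hzero : ∀ x, a x = 0 ↔ b x = 0)
    (hord : ∀ x y, a x ≤ a y ↔ b x ≤ b y) (hfin : (Set.range b).Finite)
    {f : ℝ} (hf0 : 0 ≤ f) (hf1 : f < 1) :
    ∃ f' : ℝ, 0 ≤ f' ∧ f' < 1 ∧ (f = 0 ↔ f' = 0) ∧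
      ∀ x, (a x + f < 1 ↔ b x + f' < 1) ∧ (a x + f = 1 ↔ b x + f' = 1) := by
  rcases hf0.eq_or_lt with rfl | hf
  · refine ⟨0, le_rfl, one_pos, Iff.rfl, fun x => ?_⟩
    have := ha x
    have := hb x
    constructor <;> constructor <;> intro <;> linarith
  have hlt : ∀ x y, a x < a y ↔ b x < b y := fun x y => by
    rw [← not_le, ← not_le, hord]
  by_cases hex : ∃ z, a z = 1 - f
  · obtain ⟨z, hz⟩ := hex
    have hz0 : b z ≠ 0 := fun h => by have := (hzero z).2 h; linarith
    have hz1 : 0 < b z := lt_of_le_of_ne (hb z).1 (Ne.symm hz0)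
    have := (hb z).2
    refine ⟨1 - b z, by linarith, by linarith, ?_, fun x => ⟨?_, ?_⟩⟩
    · constructor <;> intro <;> linarith
    · have := hlt x z
      constructor
      · intro h; have := this.1 (by linarith); linarith
      · intro h; have := this.2 (by linarith); linarith
    · have h1 := hord x z
      have h2 := hord z x
      constructor
      · intro h
        have := h1.1 (by linarith); have := h2.1 (by linarith); linarith
      · intro h
        have := h1.2 (by linarith); have := h2.2 (by linarith); linarith
  · push Not at hex
    -- The sets of values `b x` that must lie below, respectively above, `1 - f'`.
    have flo : (b '' {x | a x < 1 - f}).Finite := hfin.subset (Set.image_subset_range _ _)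
    have fhi : (b '' {x | 1 - f < a x}).Finite := hfin.subset (Set.image_subset_range _ _)
    obtain ⟨g, hg1, hg2⟩ := Order.exists_between_finsets
      (insert 0 flo.toFinset) (insert 1 fhi.toFinset) (by
        intro p hp q hq
        simp only [Finset.mem_insert, Set.Finite.mem_toFinset, Set.mem_image,
          Set.mem_ofPred_eq] at hp hq
        rcases hp with rfl | ⟨x, hx, rfl⟩ <;> rcases hq with rfl | ⟨y, hy, rfl⟩
        · exact one_pos
        · refine lt_of_le_of_ne (hb y).1 fun h => ?_
          have := (hzero y).2 h.symm
          linarith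
        · exact (hb x).2
        · exact (hlt x y).1 (by linarith))
    have g0 : 0 < g := hg1 0 (by simp)
    have g1 : g < 1 := hg2 1 (by simp)
    refine ⟨1 - g, by linarith, by linarith, ?_, fun x => ?_⟩
    · constructor <;> intro <;> linarith
    · rcases lt_or_gt_of_ne (hex x) with h | h
      · have : b x < g := hg1 _ (by
          simp only [Finset.mem_insert, Set.Finite.mem_toFinset, Set.mem_image]
          exact Or.inr ⟨x, h, rfl⟩)
        constructor <;> constructor <;> intro <;> linarith
      · have : g < b x := hg2 _ (by
          simp only [Finset.mem_insert, Set.Finite.mem_toFinset, Set.mem_image]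
          exact Or.inr ⟨x, h, rfl⟩)
        constructor <;> constructor <;> intro <;> linarith

/-- Integer and fractional part of `a + d` when the fractional parts do not carry. -/
lemma floor_fract_add_of_lt {a d : ℝ} (h : Int.fract a + Int.fract d < 1) :
    ⌊a + d⌋ = ⌊a⌋ + ⌊d⌋ ∧ Int.fract (a + d) = Int.fract a + Int.fract d := by
  have e : ⌊a + d⌋ = ⌊a⌋ + ⌊d⌋ := by
    rw [Int.floor_eq_iff]
    have := Int.floor_add_fract a
    have := Int.floor_add_fract d
    have := Int.fract_nonneg a
    have := Int.fract_nonneg d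
    push_cast
    constructor <;> linarith
  refine ⟨e, ?_⟩
  rw [← Int.self_sub_floor, e, ← Int.self_sub_floor, ← Int.self_sub_floor]
  push_cast
  ring

/-- Integer and fractional part of `a + d` when the fractional parts carry. -/
lemma floor_fract_add_of_ge {a d : ℝ} (h : 1 ≤ Int.fract a + Int.fract d) :
    ⌊a + d⌋ = ⌊a⌋ + ⌊d⌋ + 1 ∧ Int.fract (a + d) = Int.fract a + Int.fract d - 1 := by
  have e : ⌊a + d⌋ = ⌊a⌋ + ⌊d⌋ + 1 := by
    rw [Int.floor_eq_iff]
    have := Int.floor_add_fract a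
    have := Int.floor_add_fract d
    have := Int.fract_lt_one a
    have := Int.fract_lt_one d
    push_cast
    constructor <;> linarith
  refine ⟨e, ?_⟩
  rw [← Int.self_sub_floor, e, ← Int.self_sub_floor, ← Int.self_sub_floor]
  push_cast
  ring

/-- Time-abstract bisimulation for the delay part of a step. -/
lemma RegEquiv.exists_delay {X : Type} {M : ℕ} {v w : ClockVal X} (h : RegEquiv M v w)
    (hfin : (Set.range w).Finite) (d : NNReal) :
    ∃ d' : NNReal, RegEquiv M (ClockVal.add v d) (ClockVal.add w d') := by
  rw [regEquiv_iff] at h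
  obtain ⟨hval, hord⟩ := h
  obtain ⟨f', f0, f1, fz, hf⟩ := exists_fract_delay (ι := {x : X // (v x : ℝ) ≤ M})
    (a := fun x => Int.fract (v x : ℝ)) (b := fun x => Int.fract (w x : ℝ)) (f := Int.fract (d : ℝ))
    (fun x => ⟨Int.fract_nonneg _, Int.fract_lt_one _⟩)
    (fun x => ⟨Int.fract_nonneg _, Int.fract_lt_one _⟩)
    (fun x => (hval x).2.2 x.2) (fun x y => hord x y x.2 y.2)
    ((hfin.image fun r : NNReal => Int.fract (r : ℝ)).subset (by
      rintro _ ⟨x, rfl⟩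
      exact ⟨w x, ⟨x, rfl⟩, rfl⟩))
    (Int.fract_nonneg _) (Int.fract_lt_one _)
  have hd0 : (0 : ℝ) ≤ ⌊(d : ℝ)⌋ := by exact_mod_cast Int.floor_nonneg.2 d.2
  obtain ⟨d', hd'⟩ : ∃ d' : NNReal, (d' : ℝ) = ⌊(d : ℝ)⌋ + f' :=
    ⟨⟨⌊(d : ℝ)⌋ + f', by linarith⟩, rfl⟩
  have hfl : ⌊(d' : ℝ)⌋ = ⌊(d : ℝ)⌋ := by
    rw [hd', Int.floor_eq_iff]
    constructor <;> linarith
  have hfr : Int.fract (d' : ℝ) = f' := by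
    rw [← Int.self_sub_floor, hfl, hd']
    ring
  rw [← hfr] at fz hf
  have hgt : ∀ x, ¬ (v x : ℝ) ≤ M → (M : ℝ) < v x + d ∧ (M : ℝ) < w x + d' := fun x hx => by
    have h1 := d.2
    have h2 := d'.2
    have h3 : (M : ℝ) < v x := not_le.1 hx
    have h4 := (hval x).1.1 h3
    have h1 : (0 : ℝ) ≤ d := h1
    have h2 : (0 : ℝ) ≤ d' := h2
    constructor <;> linarith
  refine ⟨d', regEquiv_iff.2 ⟨fun x => ?_, fun x y hx hy => ?_⟩⟩
  · simp only [ClockVal.add, NNReal.coe_add]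
    by_cases hx : (v x : ℝ) ≤ M
    · have hlt := (hf ⟨x, hx⟩).1
      have heq := (hf ⟨x, hx⟩).2
      simp only at hlt heq
      have hz := (hval x).2.2 hx
      have p1 := Int.fract_nonneg (v x : ℝ)
      have p2 := Int.fract_nonneg (w x : ℝ)
      have p3 := Int.fract_nonneg (d : ℝ)
      have p4 := Int.fract_nonneg (d' : ℝ)
      by_cases hc : Int.fract (v x : ℝ) + Int.fract (d : ℝ) < 1
      · obtain ⟨e1, e2⟩ := floor_fract_add_of_lt hc
        obtain ⟨e3, e4⟩ := floor_fract_add_of_lt (hlt.1 hc)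
        refine .of_floor (by rw [e1, e3, hfl, (hval x).2.1 hx]) ?_
        rw [e2, e4, add_eq_zero_iff_of_nonneg p1 p3, add_eq_zero_iff_of_nonneg p2 p4, hz, fz]
      · have hc' := mt hlt.2 hc
        obtain ⟨e1, e2⟩ := floor_fract_add_of_ge (not_lt.1 hc)
        obtain ⟨e3, e4⟩ := floor_fract_add_of_ge (not_lt.1 hc')
        refine .of_floor (by rw [e1, e3, hfl, (hval x).2.1 hx]) ?_
        rw [e2, e4, sub_eq_zero, sub_eq_zero, heq]
    · have := hgt x hx
      exact ⟨by simp [this], fun h => absurd h (not_le.2 this.1),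
        fun h => absurd h (not_le.2 this.1)⟩
  · simp only [ClockVal.add, NNReal.coe_add] at hx hy ⊢
    have hx' : (v x : ℝ) ≤ M := by_contra fun h => absurd hx (not_le.2 (hgt x h).1)
    have hy' : (v y : ℝ) ≤ M := by_contra fun h => absurd hy (not_le.2 (hgt y h).1)
    have hltx := (hf ⟨x, hx'⟩).1
    have hlty := (hf ⟨y, hy'⟩).1
    simp only at hltx hlty
    have ho := hord x y hx' hy'
    have p1 := Int.fract_nonneg (v x : ℝ)
    have p2 := Int.fract_nonneg (w x : ℝ)
    have p3 := Int.fract_nonneg (v y : ℝ)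
    have p4 := Int.fract_nonneg (w y : ℝ)
    have q1 := Int.fract_lt_one (v x : ℝ)
    have q2 := Int.fract_lt_one (w x : ℝ)
    have q3 := Int.fract_lt_one (v y : ℝ)
    have q4 := Int.fract_lt_one (w y : ℝ)
    by_cases hcx : Int.fract (v x : ℝ) + Int.fract (d : ℝ) < 1 <;>
      by_cases hcy : Int.fract (v y : ℝ) + Int.fract (d : ℝ) < 1
    · rw [(floor_fract_add_of_lt hcx).2, (floor_fract_add_of_lt hcy).2,
        (floor_fract_add_of_lt (hltx.1 hcx)).2, (floor_fract_add_of_lt (hlty.1 hcy)).2]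
      simpa using ho
    · rw [(floor_fract_add_of_lt hcx).2, (floor_fract_add_of_ge (not_lt.1 hcy)).2,
        (floor_fract_add_of_lt (hltx.1 hcx)).2,
        (floor_fract_add_of_ge (not_lt.1 (mt hlty.2 hcy))).2]
      constructor <;> intro <;> linarith
    · have := hlty.1 hcy
      have := not_lt.1 (mt hltx.2 hcx)
      rw [(floor_fract_add_of_ge (not_lt.1 hcx)).2, (floor_fract_add_of_lt hcy).2,
        (floor_fract_add_of_ge this).2, (floor_fract_add_of_lt (hlty.1 hcy)).2]
      constructor <;> intro <;> linarith
    · rw [(floor_fract_add_of_ge (not_lt.1 hcx)).2, (floor_fract_add_of_ge (not_lt.1 hcy)).2,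
        (floor_fract_add_of_ge (not_lt.1 (mt hltx.2 hcx))).2,
        (floor_fract_add_of_ge (not_lt.1 (mt hlty.2 hcy))).2]
      simpa using ho

lemma DRegEquiv.exists_delay {X : Type} {M : ℕ} {v w : ClockVal X} (h : DRegEquiv M v w)
    (hfin : (Set.range w).Finite) (d : NNReal) :
    ∃ d' : NNReal, DRegEquiv M (ClockVal.add v d) (ClockVal.add w d') := by
  obtain ⟨d', hd'⟩ := h.regEquiv.exists_delay hfin d
  refine ⟨d', (regEquiv_iff.1 hd').1, fun x y c h1 h2 => ?_⟩
  simpa [ClockVal.add] using h.2 x y c h1 h2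

/-! ### Lifting paths to runs -/

lemma finite_range_step {X : Type} {w : ClockVal X} (R : Set X) (d : NNReal)
    (h : (Set.range w).Finite) : (Set.range (resetVal R (ClockVal.add w d))).Finite := by
  refine ((h.image (· + d)).insert 0).subset ?_
  rintro _ ⟨x, rfl⟩
  by_cases hx : x ∈ R
  · exact Or.inl (resetVal_of_mem hx)
  · exact Or.inr ⟨w x, ⟨x, rfl⟩, (resetVal_of_notMem (v := ClockVal.add w d) hx).symm⟩

/-- Any equivalence `E` that preserves guards and resets and can match delays from valuations with
finitely many values lets every path of its region graph be lifted to a run. -/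
lemma lift_path {Q X : Type} (A : TBA Q X) (M : ℕ) (hA : A.BoundsConsts M)
    (E : ClockVal X → ClockVal X → Prop) (hrefl : ∀ v, E v v)
    (hsymm : ∀ {v w}, E v w → E w v) (htrans : ∀ {u v w}, E u v → E v w → E u w)
    (hval : ∀ {v w}, E v w → ∀ x, ValEquiv M (v x) (w x))
    (hreset : ∀ {v w} (R : Set X), E v w → E (resetVal R v) (resetVal R w))
    (hdelay : ∀ {v w}, E v w → (Set.range w).Finite → ∀ d : NNReal,
      ∃ d' : NNReal, E (ClockVal.add v d) (ClockVal.add w d'))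
    (nodes : ℕ → RNode Q X) (ts : ℕ → TBATrans Q X)
    (h0 : nodes 0 = (A.q0, {v' | E (zeroVal X) v'}))
    (hpath : ∀ i, RGTrans A E (ts i) (nodes i) (nodes (i + 1))) :
    ∃ (st : ℕ → Q × ClockVal X) (ds : ℕ → NNReal),
      IsRun A st ds ts ∧ (∀ i, (st i).1 = (nodes i).1) ∧ (∀ i, (st i).2 ∈ (nodes i).2) := by
  have step : ∀ i (w : ClockVal X), w ∈ (nodes i).2 ∧ (Set.range w).Finite →
      ∃ (d : NNReal) (w' : ClockVal X), (w' ∈ (nodes (i + 1)).2 ∧ (Set.range w').Finite) ∧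
        A.Step (ts i) d ((nodes i).1, w) ((nodes (i + 1)).1, w') := by
    rintro i w ⟨hw, hfin⟩
    obtain ⟨⟨u, hu⟩, ⟨u', hu'⟩, v, hv, d, v', hv', ht, hsrc, hdst, hg, hr⟩ := hpath i
    rw [hu] at hv hw
    rw [hu'] at hv'
    obtain ⟨d', hd'⟩ := hdelay (htrans (hsymm hv) hw) hfin d
    refine ⟨d', resetVal (ts i).reset (ClockVal.add w d'), ⟨?_, finite_range_step _ _ hfin⟩,
      ht, hsrc, hdst, guard_sat_of_valEquiv (hA _ ht) (hval hd') hg, rfl⟩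
    rw [hu']
    simp only at hr
    rw [hr] at hv'
    exact htrans hv' (hreset _ hd')
  choose! D W hW hstep using step
  let V : ℕ → ClockVal X := fun i => Nat.rec (zeroVal X) (fun i w => W i w) i
  have hV : ∀ i, V i ∈ (nodes i).2 ∧ (Set.range (V i)).Finite := by
    intro i
    induction i with
    | zero =>
      refine ⟨by rw [h0]; exact hrefl _, (Set.finite_singleton 0).subset ?_⟩
      rintro _ ⟨x, rfl⟩
      rfl
    | succ i ih => exact hW i _ ih
  refine ⟨fun i => ((nodes i).1, V i), fun i => D i (V i), ⟨?_, fun i => hstep i _ (hV i)⟩,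
    fun _ => rfl, fun i => (hV i).1⟩
  simp only [h0]
  rfl

/-- every infinite path of `RG(A)` starting in `(q0, [ν0])` is an
abstraction of a run of `A`; similarly for `RG^d(A)`. -/
theorem region_path_abstracts_run
    {Q X : Type} (A : TBA Q X) (M : ℕ) (hM : A.IsMaxConst M) :
    (∀ (nodes : ℕ → RNode Q X) (ts : ℕ → TBATrans Q X),
      nodes 0 = (A.q0, {v' | RegEquiv M (zeroVal X) v'}) →
      (∀ i, RGTrans A (RegEquiv M) (ts i) (nodes i) (nodes (i + 1))) →
      ∃ (st : ℕ → Q × ClockVal X) (ds : ℕ → NNReal),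
        IsRun A st ds ts ∧ (∀ i, (st i).1 = (nodes i).1) ∧
        (∀ i, (st i).2 ∈ (nodes i).2)) ∧
    (∀ (nodes : ℕ → RNode Q X) (ts : ℕ → TBATrans Q X),
      nodes 0 = (A.q0, {v' | DRegEquiv M (zeroVal X) v'}) →
      (∀ i, RGTrans A (DRegEquiv M) (ts i) (nodes i) (nodes (i + 1))) →
      ∃ (st : ℕ → Q × ClockVal X) (ds : ℕ → NNReal),
        IsRun A st ds ts ∧ (∀ i, (st i).1 = (nodes i).1) ∧
        (∀ i, (st i).2 ∈ (nodes i).2)) := by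
  exact ⟨lift_path A M hM.1 (RegEquiv M) (RegEquiv.refl M) RegEquiv.symm RegEquiv.trans
      (fun h => (regEquiv_iff.1 h).1) RegEquiv.reset RegEquiv.exists_delay,
    lift_path A M hM.1 (DRegEquiv M) (DRegEquiv.refl M) DRegEquiv.symm DRegEquiv.trans
      (fun h => h.1) DRegEquiv.reset DRegEquiv.exists_delay⟩
end

section
/- Let A be a Timed Büchi Automaton with maximal constant M in its guards. For every zone Z over the clocks of A: Z ⊆ Closure^d_M(Z) ⊆ Approx_M(Z) ⊆ Closure_M(Z). -/
/-! ### Difference constraints as potentials -/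

/-- Satisfaction of a zone constraint by a potential `f`, where `f none` plays the role of the
reference clock `0`: only differences of coordinates matter. -/
def ZoneConstraint.potSat {X : Type} : ZoneConstraint X → (Option X → ℝ) → Prop
  | .single x cmp c, f => CmpOp.sat cmp (f (some x) - f none) (c : ℝ)
  | .diff x y cmp c, f => CmpOp.sat cmp (f (some x) - f (some y)) (c : ℝ)

/-- The clocks occurring in a zone constraint. -/
def ZoneConstraint.clocks {X : Type} : ZoneConstraint X → List X
  | .single x _ _ => [x]
  | .diff x y _ _ => [x, y]

/-- The zone of a constraint list, homogenised with a reference clock: the potentials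
`f` for which `x ↦ f x - f none` is a valuation of the zone. -/
def potZone {X : Type} (l : List (ZoneConstraint X)) : Set (Option X → ℝ) :=
  {f | (∀ c ∈ l, c.potSat f) ∧ ∀ x, CmpOp.sat .ge (f (some x) - f none) (0 : ℕ)}

/-- The potential of a valuation, with reference value `0`. -/
def toPot {X : Type} (v : ClockVal X) : Option X → ℝ
  | none => 0
  | some x => v x

lemma toPot_mem {X : Type} (l : List (ZoneConstraint X)) (v : ClockVal X)
    (h : ∀ c ∈ l, ZoneConstraint.sat c v) : toPot v ∈ potZone l := by
  refine ⟨fun c hc => ?_, fun x => by simp [toPot, CmpOp.sat]⟩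
  have := h c hc
  cases c <;> simpa [ZoneConstraint.potSat, ZoneConstraint.sat, toPot] using this

/-- A potential belongs to `potZone` once it satisfies every comparison of a difference with a
natural number that holds throughout `potZone`. -/
lemma potZone_of_forall {X : Type} {l : List (ZoneConstraint X)} {g : Option X → ℝ}
    (h : ∀ op i j (n : ℕ), (∀ f ∈ potZone l, CmpOp.sat op (f i - f j) n) →
      CmpOp.sat op (g i - g j) n) : g ∈ potZone l := by
  refine ⟨fun c hc => ?_, fun x => h _ _ _ _ fun f hf => hf.2 x⟩
  cases c with
  | single x op n => exact h _ _ _ _ fun f hf => hf.1 _ hc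
  | diff x y op n => exact h _ _ _ _ fun f hf => hf.1 _ hc

/-- Pointwise form of the preservation principle, for an operation of three potentials. -/
lemma potZone_closed {X : Type} {l : List (ZoneConstraint X)} (m : ℝ → ℝ → ℝ → ℝ)
    (h : ∀ op (a b c a' b' c' : ℝ) (n : ℕ), CmpOp.sat op (a - a') n → CmpOp.sat op (b - b') n →
      CmpOp.sat op (c - c') n → CmpOp.sat op (m a b c - m a' b' c') n)
    {f₁ f₂ f₃ : Option X → ℝ} (h₁ : f₁ ∈ potZone l) (h₂ : f₂ ∈ potZone l) (h₃ : f₃ ∈ potZone l) :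
    (fun i => m (f₁ i) (f₂ i) (f₃ i)) ∈ potZone l :=
  potZone_of_forall fun op _ _ n hf =>
    h op _ _ _ _ _ _ n (hf _ h₁) (hf _ h₂) (hf _ h₃)

lemma potZone_shift {X : Type} {l : List (ZoneConstraint X)} {f : Option X → ℝ}
    (hf : f ∈ potZone l) (s : ℝ) : (fun i => f i + s) ∈ potZone l :=
  potZone_closed (fun a _ _ => a + s) (fun op a b c a' b' c' n h _ _ => by simpa using h) hf hf hf

lemma potZone_convex {X : Type} (l : List (ZoneConstraint X)) : Convex ℝ (potZone l) := by
  intro f hf g hg a b ha hb hab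
  refine potZone_closed (fun p q _ => a * p + b * q) ?_ hf hg hg
  intro op p q _ p' q' _ n h₁ h₂ _
  obtain rfl : a = 1 - b := by linarith
  rcases eq_or_lt_of_le hb with rfl | hb'
  · simpa using h₁
  cases op <;> simp only [CmpOp.sat] at * <;> nlinarith

/-! ### Medians and a Helly property -/

/-- The median of three reals. -/
noncomputable def med (a b c : ℝ) : ℝ := max (min a b) (min (max a b) c)

lemma potZone_med {X : Type} {l : List (ZoneConstraint X)}
    {f₁ f₂ f₃ : Option X → ℝ} (h₁ : f₁ ∈ potZone l) (h₂ : f₂ ∈ potZone l) (h₃ : f₃ ∈ potZone l) :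
    (fun i => med (f₁ i) (f₂ i) (f₃ i)) ∈ potZone l := by
  have hle : ∀ a b c a' b' c' n : ℝ, a - a' ≤ n → b - b' ≤ n → c - c' ≤ n →
      med a b c - med a' b' c' ≤ n := by
    intro a b c a' b' c' n h1 h2 h3
    unfold med; grind
  have hlt : ∀ a b c a' b' c' n : ℝ, a - a' < n → b - b' < n → c - c' < n →
      med a b c - med a' b' c' < n := by
    intro a b c a' b' c' n h1 h2 h3
    unfold med; grind
  refine potZone_closed med ?_ h₁ h₂ h₃
  intro op a b c a' b' c' n h1 h2 h3
  have hle1 := hle a b c a' b' c' n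
  have hle2 := hle a' b' c' a b c (-n)
  have hlt1 := hlt a b c a' b' c' n
  have hlt2 := hlt a' b' c' a b c (-n)
  cases op <;> simp only [CmpOp.sat] at * <;> grind

lemma med_mem {I : Set ℝ} (hI : I.OrdConnected) {a b c : ℝ}
    (h : (a ∈ I ∧ b ∈ I) ∨ (b ∈ I ∧ c ∈ I) ∨ (a ∈ I ∧ c ∈ I)) : med a b c ∈ I := by
  have key : ∀ {p q r : ℝ}, p ∈ I → q ∈ I → min p q ≤ r → r ≤ max p q → r ∈ I := by
    intro p q r hp hq h1 h2
    rcases le_total p q with h | h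
    · exact hI.out hp hq ⟨by simpa [h] using h1, by simpa [h] using h2⟩
    · exact hI.out hq hp ⟨by simpa [h] using h1, by simpa [h] using h2⟩
  rcases h with ⟨h, h'⟩ | ⟨h, h'⟩ | ⟨h, h'⟩ <;>
    refine key h h' ?_ ?_ <;> unfold med <;> grind

/-- Helly property of median-closed sets (the Baker-Pixley argument): interval conditions on
finitely many coordinates can be met simultaneously as soon as any two of them can. -/
lemma median_helly {ι : Type} (I : ι → Set ℝ) (hI : ∀ i, (I i).OrdConnected) (L : List ι) :
    ∀ P : Set (ι → ℝ), P.Nonempty →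
      (∀ f ∈ P, ∀ g ∈ P, ∀ h ∈ P, (fun i => med (f i) (g i) (h i)) ∈ P) →
      (∀ i j, ∃ f ∈ P, f i ∈ I i ∧ f j ∈ I j) → ∃ f ∈ P, ∀ i ∈ L, f i ∈ I i := by
  induction L with
  | nil => intro P hP _ _; obtain ⟨f, hf⟩ := hP; exact ⟨f, hf, by simp⟩
  | cons i L ih =>
    intro P _ hmed hpair
    -- restricting to `f i ∈ I i` keeps the pair condition, by the median of three pair solutions
    obtain ⟨f, ⟨hf, hfi⟩, hfL⟩ := ih {f | f ∈ P ∧ f i ∈ I i}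
      (by obtain ⟨f, hf, h, -⟩ := hpair i i; exact ⟨f, hf, h⟩)
      (fun f hf g hg h hh => ⟨hmed f hf.1 g hg.1 h hh.1, med_mem (hI i) (.inl ⟨hf.2, hg.2⟩)⟩)
      (fun j k => by
        obtain ⟨f, hf, hf1, hf2⟩ := hpair i j
        obtain ⟨g, hg, hg1, hg2⟩ := hpair j k
        obtain ⟨h, hh, hh1, hh2⟩ := hpair i k
        exact ⟨_, ⟨hmed f hf g hg h hh, med_mem (hI i) (.inr (.inr ⟨hf1, hh1⟩))⟩,
          med_mem (hI j) (.inl ⟨hf2, hg1⟩), med_mem (hI k) (.inr (.inl ⟨hg2, hh2⟩))⟩)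
    exact ⟨f, hf, by simpa using ⟨hfi, hfL⟩⟩

/-! ### Integrality of the bounds on differences -/

/-- A reparametrisation of the real line that acts on fractional parts by `t ↦ t ^ k`. -/
noncomputable def warp (k r : ℝ) : ℝ := ⌊r⌋ + Int.fract r ^ k

lemma warp_strictMono {k : ℝ} (hk : 0 < k) : StrictMono (warp k) := by
  intro a b hab
  unfold warp
  have ha := Real.rpow_lt_one (Int.fract_nonneg a) (Int.fract_lt_one a) hk
  have hb := Real.rpow_nonneg (Int.fract_nonneg b) k
  rcases (Int.floor_mono hab.le).eq_or_lt with h | h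
  · have : Int.fract a < Int.fract b := by unfold Int.fract; rw [h]; linarith
    have := Real.rpow_lt_rpow (Int.fract_nonneg a) this hk
    rw [h]; linarith
  · have : (⌊a⌋ : ℝ) + 1 ≤ ⌊b⌋ := by exact_mod_cast h
    linarith

lemma potZone_warp {X : Type} {l : List (ZoneConstraint X)} {f : Option X → ℝ}
    (hf : f ∈ potZone l) {k : ℝ} (hk : 0 < k) : (fun i => warp k (f i)) ∈ potZone l := by
  refine potZone_closed (fun a _ _ => warp k a) ?_ hf hf hf
  intro op a _ _ b _ _ n h _ _
  have hadd : warp k (b + n) = warp k b + n := by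
    simp only [warp, Int.floor_add_natCast, Int.fract_add_natCast]; push_cast; ring
  have hlt := (warp_strictMono hk).lt_iff_lt (a := a) (b := b + n)
  have hle := (warp_strictMono hk).le_iff_le (a := a) (b := b + n)
  rw [hadd] at hlt hle
  cases op <;> simp only [CmpOp.sat] at * <;> grind

/-- The set of values of `f i - f j` on a zone is a union of points `n` and open unit intervals
`(n, n + 1)`; here, an integral bound is extracted from a strict real bound. -/
lemma le_floor_of_lt {X : Type} {l : List (ZoneConstraint X)} {i j : Option X} {d : ℝ}
    (h : ∀ f ∈ potZone l, f i - f j < d) :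
    ∀ f ∈ potZone l, f i - f j ≤ ⌊d⌋ := by
  intro f hf
  by_contra! hlt
  have hfd := h f hf
  obtain ⟨t, ht⟩ : ∃ t, t = f i - f j := ⟨_, rfl⟩
  rw [← ht] at hlt hfd
  have hfl : ⌊t⌋ = ⌊d⌋ := Int.floor_eq_iff.2 ⟨hlt.le, hfd.trans (Int.lt_floor_add_one d)⟩
  have ht0 : 0 < Int.fract t := by unfold Int.fract; rw [hfl]; linarith
  have hd0 : 0 < Int.fract d := by unfold Int.fract; linarith
  have hlt0 := Real.log_neg ht0 (Int.fract_lt_one t)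
  have hld0 := Real.log_neg hd0 (Int.fract_lt_one d)
  -- the exponent sending `fract t` to `fract d`
  have hk : 0 < Real.log (Int.fract d) / Real.log (Int.fract t) := div_pos_of_neg_of_neg hld0 hlt0
  have hg := h _ (potZone_warp (potZone_shift hf (-f j)) hk)
  have e1 : warp (Real.log (Int.fract d) / Real.log (Int.fract t)) (f i + -f j) = d := by
    rw [← sub_eq_add_neg, ← ht, warp, Real.rpow_def_of_pos ht0, mul_div_cancel₀ _ hlt0.ne,
      Real.exp_log hd0, hfl, Int.floor_add_fract]
  have e2 : warp (Real.log (Int.fract d) / Real.log (Int.fract t)) (f j + -f j) = 0 := by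
    simp [warp, Real.zero_rpow hk.ne']
  simp only [e1, e2] at hg
  linarith

/-! ### Convex unions of d-regions -/

/-- Membership in `Approx_M(Z)`, tested on one convex union of d-regions; the trivial weights
`0` and `1` are discharged here. -/
lemma approx_mem {X : Type} {M : ℕ} {Z S : Set (ClockVal X)} {v : ClockVal X}
    (hv : v ∈ approxZ M Z) (hZ : Z ⊆ S)
    (hconv : ∀ u ∈ S, ∀ w ∈ S, ∀ p : ClockVal X, ∀ t : ℝ, 0 < t → t < 1 →
      (∀ x, (p x : ℝ) = t * u x + (1 - t) * w x) → p ∈ S)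
    (hsat : ∀ u ∈ S, ∀ w, DRegEquiv M u w → w ∈ S) : v ∈ S := by
  refine hv S ⟨hZ, ?_, hsat⟩
  intro u hu w hw θ hθ
  rcases hθ.eq_or_lt with rfl | h1
  · simpa using hu
  rcases (show 0 ≤ θ from zero_le).eq_or_lt with rfl | h0
  · simpa using hw
  refine hconv u hu w hw _ θ (by exact_mod_cast h0) (by exact_mod_cast h1) fun x => ?_
  simp [NNReal.coe_sub hθ]

lemma DRegEquiv.le_iff {X : Type} {M : ℕ} {u w : ClockVal X} (h : DRegEquiv M u w) (x : X)
    {n : ℕ} (hn : n ≤ M) : ((u x : ℝ) ≤ n ↔ (w x : ℝ) ≤ n) ∧ ((u x : ℝ) < n ↔ (w x : ℝ) < n) := by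
  obtain ⟨h1, h2, h3⟩ := h.1 x
  have hn' : (n : ℝ) ≤ M := by exact_mod_cast hn
  rcases le_or_gt (u x : ℝ) M with hu | hu
  · have hf := h2 hu
    have hz := h3 hu
    have lt_iff : ∀ r : ℝ, r < n ↔ ⌊r⌋ < (n : ℤ) := fun r => by rw [Int.floor_lt]; simp
    have le_iff : ∀ r : ℝ, r ≤ n ↔ ⌊r⌋ < (n : ℤ) ∨ (⌊r⌋ = n ∧ Int.fract r = 0) := by
      intro r
      rw [← lt_iff, le_iff_lt_or_eq]
      refine or_congr Iff.rfl ⟨fun h => by simp [h], fun ⟨ha, hb⟩ => ?_⟩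
      have := Int.floor_add_fract r
      rw [ha, hb] at this; simpa using this.symm
    rw [lt_iff, lt_iff, le_iff, le_iff, hf, hz]
    exact ⟨Iff.rfl, Iff.rfl⟩
  · have := h1.1 hu
    constructor <;> constructor <;> intro <;> linarith

section Separation

variable {X : Type} {M : ℕ} {Z : Set (ClockVal X)} {v : ClockVal X}

lemma approx_le (hv : v ∈ approxZ M Z) {x : X} {n : ℕ} (hn : n ≤ M)
    (h : ∀ z ∈ Z, (z x : ℝ) ≤ n) : (v x : ℝ) ≤ n :=
  approx_mem (S := {v | (v x : ℝ) ≤ n}) hv h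
    (fun u hu w hw p t h0 h1 hp => by
      simp only [Set.mem_ofPred_eq] at *; rw [hp]; nlinarith)
    (fun u hu w huw => (huw.le_iff x hn).1.1 hu)

lemma approx_lt (hv : v ∈ approxZ M Z) {x : X} {n : ℕ} (hn : n ≤ M)
    (h : ∀ z ∈ Z, (z x : ℝ) < n) : (v x : ℝ) < n :=
  approx_mem (S := {v | (v x : ℝ) < n}) hv h
    (fun u hu w hw p t h0 h1 hp => by
      simp only [Set.mem_ofPred_eq] at *; rw [hp]; nlinarith)
    (fun u hu w huw => (huw.le_iff x hn).2.1 hu)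

lemma approx_ge (hv : v ∈ approxZ M Z) {x : X} {n : ℕ} (hn : n ≤ M)
    (h : ∀ z ∈ Z, (n : ℝ) ≤ z x) : (n : ℝ) ≤ v x :=
  approx_mem (S := {v | (n : ℝ) ≤ v x}) hv h
    (fun u hu w hw p t h0 h1 hp => by
      simp only [Set.mem_ofPred_eq] at *; rw [hp]; nlinarith)
    (fun u hu w huw => by
      simp only [Set.mem_ofPred_eq] at *; rw [← not_lt] at hu ⊢
      rwa [← (huw.le_iff x hn).2])

lemma approx_gt (hv : v ∈ approxZ M Z) {x : X} {n : ℕ} (hn : n ≤ M)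
    (h : ∀ z ∈ Z, (n : ℝ) < z x) : (n : ℝ) < v x :=
  approx_mem (S := {v | (n : ℝ) < v x}) hv h
    (fun u hu w hw p t h0 h1 hp => by
      simp only [Set.mem_ofPred_eq] at *; rw [hp]; nlinarith)
    (fun u hu w huw => by
      simp only [Set.mem_ofPred_eq] at *; rw [← not_le] at hu ⊢
      rwa [← (huw.le_iff x hn).1])

lemma approx_sub_le (hv : v ∈ approxZ M Z) {x y : X} {c : ℤ} (hc : -(M : ℤ) < c) (hc' : c < M)
    (h : ∀ z ∈ Z, (z x : ℝ) - z y ≤ c) : (v x : ℝ) - v y ≤ c :=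
  approx_mem (S := {v | (v x : ℝ) - v y ≤ c}) hv h
    (fun u hu w hw p t h0 h1 hp => by
      simp only [Set.mem_ofPred_eq] at *; rw [hp, hp]; nlinarith)
    (fun u hu w huw => (huw.2 x y c hc hc').1 hu)

lemma approx_sub_lt (hv : v ∈ approxZ M Z) {x y : X} {c : ℤ} (hc : -(M : ℤ) < c) (hc' : c < M)
    (h : ∀ z ∈ Z, (z x : ℝ) - z y < c) : (v x : ℝ) - v y < c :=
  approx_mem (S := {v | (v x : ℝ) - v y < c}) hv h
    (fun u hu w hw p t h0 h1 hp => by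
      simp only [Set.mem_ofPred_eq] at *; rw [hp, hp]; nlinarith)
    (fun u hu w huw => by
      have := huw.2 y x (-c) (by omega) (by omega)
      push_cast at this
      simp only [Set.mem_ofPred_eq] at *
      by_contra hcon
      have := this.2 (by linarith)
      linarith)

/-- The constraint `x - y ≤ M` is not a union of d-regions, but its weakening
`y = 0 → x ≤ M` is one, and is still convex. -/
lemma approx_edge_le (hv : v ∈ approxZ M Z) {x y : X}
    (h : ∀ z ∈ Z, (z x : ℝ) - z y ≤ M) : (v y : ℝ) ≤ (0 : ℕ) → (v x : ℝ) ≤ M :=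
  approx_mem (S := {v | (v y : ℝ) ≤ (0 : ℕ) → (v x : ℝ) ≤ M}) hv
    (fun z hz h0 => by have := h z hz; push_cast at h0; linarith)
    (fun u hu w hw p t h0 h1 hp => by
      simp only [Set.mem_ofPred_eq, Nat.cast_zero] at *
      intro hpy
      rw [hp] at hpy ⊢
      have e1 := hu (by nlinarith [mul_nonneg (sub_pos.2 h1).le (w y).coe_nonneg])
      have e2 := hw (by nlinarith [mul_nonneg h0.le (u y).coe_nonneg])
      nlinarith)
    (fun u hu w huw hy =>
      (huw.le_iff x le_rfl).1.1 (hu ((huw.le_iff y (Nat.zero_le M)).1.2 hy)))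

/-- Strict counterpart of `approx_edge_le`. -/
lemma approx_edge_lt (hv : v ∈ approxZ M Z) {x y : X}
    (h : ∀ z ∈ Z, (z x : ℝ) - z y < M) : (v y : ℝ) ≤ (0 : ℕ) → (v x : ℝ) < M :=
  approx_mem (S := {v | (v y : ℝ) ≤ (0 : ℕ) → (v x : ℝ) < M}) hv
    (fun z hz h0 => by have := h z hz; push_cast at h0; linarith)
    (fun u hu w hw p t h0 h1 hp => by
      simp only [Set.mem_ofPred_eq, Nat.cast_zero] at *
      intro hpy
      rw [hp] at hpy ⊢
      have e1 := hu (by nlinarith [mul_nonneg (sub_pos.2 h1).le (w y).coe_nonneg])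
      have e2 := hw (by nlinarith [mul_nonneg h0.le (u y).coe_nonneg])
      nlinarith)
    (fun u hu w huw hy =>
      (huw.le_iff x le_rfl).2.1 (hu ((huw.le_iff y (Nat.zero_le M)).1.2 hy)))

/-- The constraint `M ≤ y - x` is not a union of d-regions, but its weakening
`y > M ∨ (y = M ∧ x = 0)` is one, and is still convex. -/
lemma approx_edge_ge (hv : v ∈ approxZ M Z) {x y : X}
    (h : ∀ z ∈ Z, (z x : ℝ) - z y ≤ -M) :
    (M : ℝ) ≤ v y ∧ ((v y : ℝ) ≤ M → (v x : ℝ) ≤ (0 : ℕ)) :=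
  approx_mem (S := {v | (M : ℝ) ≤ v y ∧ ((v y : ℝ) ≤ M → (v x : ℝ) ≤ (0 : ℕ))}) hv
    (fun z hz => by
      have := h z hz
      have := (z x).coe_nonneg
      refine ⟨by linarith, fun _ => ?_⟩
      push_cast; linarith)
    (fun u hu w hw p t h0 h1 hp => by
      simp only [Set.mem_ofPred_eq, Nat.cast_zero] at *
      rw [hp, hp]
      refine ⟨by nlinarith, fun hpy => ?_⟩
      have e1 := hu.2 (by nlinarith)
      have e2 := hw.2 (by nlinarith)
      nlinarith)
    (fun u hu w huw => by
      simp only [Set.mem_ofPred_eq] at *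
      have a1 := huw.le_iff y (le_refl M)
      have a2 := huw.le_iff x (Nat.zero_le M)
      rw [← not_lt] at hu ⊢
      rwa [← a1.2, ← a1.1, ← a2.1])

/-! ### Pairwise compatibility of a zone with a region -/

/-- The values allowed at each coordinate when looking for a point of `Z` region equivalent to
`v`: clocks up to `M` keep their value, the others only have to stay above `M`. -/
def target (M : ℕ) (v : ClockVal X) : Option X → Set ℝ
  | none => {0}
  | some x => {r | ((v x : ℝ) ≤ M → r = v x) ∧ ((M : ℝ) < v x → (M : ℝ) < r)}

lemma target_convex (M : ℕ) (v : ClockVal X) (i : Option X) : Convex ℝ (target M v i) := by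
  cases i with
  | none => exact convex_singleton 0
  | some x =>
    rcases le_or_gt (v x : ℝ) M with h | h
    · have : target M v (some x) = {(v x : ℝ)} := by ext r; simp [target, h, not_lt.2 h]
      rw [this]; exact convex_singleton _
    · have : target M v (some x) = Set.Ioi (M : ℝ) := by ext r; simp [target, h, not_le.2 h]
      rw [this]; exact convex_Ioi _

/-- Some value of `f i - f j` on the zone reaches a difference of allowed values: otherwise a
convex union of d-regions would separate `Z` from `v`. -/
lemma one_sided {l : List (ZoneConstraint X)}
    (hZ : Z = {v | ∀ c ∈ l, ZoneConstraint.sat c v}) (hv : v ∈ approxZ M Z) (hne : Z.Nonempty)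
    (i j : Option X) :
    ∃ f ∈ potZone l, ∃ k ∈ target M v i, ∃ k' ∈ target M v j, k - k' ≤ f i - f j := by
  by_contra! hcon
  have toZ : ∀ z ∈ Z, toPot z ∈ potZone l := fun z hz => toPot_mem l z (by simpa [hZ] using hz)
  obtain ⟨z₀, hz₀⟩ := hne
  have self_mem : ∀ x, (v x : ℝ) ∈ target M v (some x) := fun x => ⟨fun _ => rfl, fun h => h⟩
  have above_mem : ∀ {x} {r : ℝ}, (M : ℝ) < v x → (M : ℝ) < r → r ∈ target M v (some x) :=
    fun {x r} h h' => ⟨fun h'' => absurd h (not_lt.2 h''), fun _ => h'⟩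
  cases i with
  | none =>
    cases j with
    | none => simpa using hcon _ (toZ z₀ hz₀) 0 rfl 0 rfl
    | some y =>
      rcases le_or_gt (v y : ℝ) M with hy | hy
      · have hlt : ∀ f ∈ potZone l, f none - f (some y) < -(v y : ℝ) := fun f hf => by
          simpa using hcon f hf 0 rfl _ (self_mem y)
        obtain ⟨n, hn⟩ : ∃ n : ℕ, ⌊-(v y : ℝ)⌋ = -(n : ℤ) := by
          refine ⟨⌈(v y : ℝ)⌉₊, ?_⟩
          rw [Int.floor_neg, Int.natCast_ceil_eq_ceil (v y).coe_nonneg]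
        have hnM : n ≤ M := by
          have : -(M : ℤ) ≤ ⌊-(v y : ℝ)⌋ := Int.le_floor.2 (by push_cast; linarith)
          omega
        by_cases hd : (⌊-(v y : ℝ)⌋ : ℝ) = -(v y : ℝ)
        · rw [hn] at hd; push_cast at hd
          have := approx_gt hv (x := y) hnM fun z hz => by
            have := hlt _ (toZ z hz); simp only [toPot] at this; linarith
          linarith
        · have hle := le_floor_of_lt hlt
          have h1 := lt_of_le_of_ne (Int.floor_le _) hd
          rw [hn] at hle h1; push_cast at hle h1
          have := approx_ge hv (x := y) hnM fun z hz => by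
            have := hle _ (toZ z hz); simp only [toPot] at this; linarith
          linarith
      · have := hcon _ (toZ z₀ hz₀) 0 rfl (max (M + 1) (z₀ y))
          (above_mem hy (lt_max_of_lt_left (by linarith)))
        simp only [toPot] at this
        linarith [le_max_right ((M : ℝ) + 1) (z₀ y)]
  | some x =>
    cases j with
    | none =>
      rcases le_or_gt (v x : ℝ) M with hx | hx
      · have hlt : ∀ f ∈ potZone l, f (some x) - f none < (v x : ℝ) := fun f hf => by
          simpa using hcon f hf _ (self_mem x) 0 rfl
        obtain ⟨n, hn⟩ : ∃ n : ℕ, ⌊(v x : ℝ)⌋ = (n : ℤ) :=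
          ⟨⌊(v x : ℝ)⌋₊, (Int.natCast_floor_eq_floor (v x).coe_nonneg).symm⟩
        have hnM : n ≤ M := by
          have : (n : ℝ) ≤ v x := by
            have := Int.floor_le (v x : ℝ); rw [hn] at this; exact_mod_cast this
          exact_mod_cast this.trans hx
        by_cases hd : (⌊(v x : ℝ)⌋ : ℝ) = (v x : ℝ)
        · rw [hn] at hd; push_cast at hd
          have := approx_lt hv (x := x) hnM fun z hz => by
            have := hlt _ (toZ z hz); simp only [toPot] at this; linarith
          linarith
        · have hle := le_floor_of_lt hlt
          have h1 := lt_of_le_of_ne (Int.floor_le _) hd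
          rw [hn] at hle h1; push_cast at hle h1
          have := approx_le hv (x := x) hnM fun z hz => by
            have := hle _ (toZ z hz); simp only [toPot] at this; linarith
          linarith
      · have := approx_le hv (x := x) le_rfl fun z hz => by
          refine le_of_forall_gt_imp_ge_of_dense fun k hk => ?_
          have := hcon _ (toZ z hz) k (above_mem hx hk) 0 rfl
          simp only [toPot] at this; linarith
        linarith
    | some y =>
      rcases lt_or_ge (M : ℝ) (v y) with hy | hy
      · have h1 := hcon _ (toZ z₀ hz₀) _ (self_mem x) (max (M + 1) (v x - z₀ x + z₀ y))
          (above_mem hy (lt_max_of_lt_left (by linarith)))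
        simp only [toPot] at h1
        linarith [le_max_right ((M : ℝ) + 1) (v x - z₀ x + z₀ y)]
      have hy0 := (v y).coe_nonneg
      have hx0 := (v x).coe_nonneg
      rcases le_or_gt (v x : ℝ) M with hx | hx
      · have hlt : ∀ f ∈ potZone l, f (some x) - f (some y) < (v x : ℝ) - v y :=
          fun f hf => hcon f hf _ (self_mem x) _ (self_mem y)
        obtain ⟨c, hc⟩ : ∃ c, c = ⌊(v x : ℝ) - v y⌋ := ⟨_, rfl⟩
        have hc1 : -(M : ℤ) ≤ c := by
          rw [hc]; exact Int.le_floor.2 (by push_cast; linarith)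
        have hcf := Int.floor_le ((v x : ℝ) - v y)
        rw [← hc] at hcf
        by_cases hd : (⌊(v x : ℝ) - v y⌋ : ℝ) = (v x : ℝ) - v y
        · rw [← hc] at hd
          have hc2 : c ≤ M := by
            have : (c : ℝ) ≤ (M : ℤ) := by push_cast; linarith
            exact_mod_cast this
          have hz : ∀ z ∈ Z, (z x : ℝ) - z y < c := fun z hz => by
            have := hlt _ (toZ z hz); simp only [toPot] at this; linarith
          rcases hc1.eq_or_lt with h1 | h1
          -- `v y = M` and `v x = 0`, while `y > M` on `Z`
          · rw [← h1] at hz; push_cast at hz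
            have := approx_gt hv (x := y) le_rfl fun z hz' => by
              have := hz z hz'; linarith [(z x).coe_nonneg]
            linarith
          rcases hc2.eq_or_lt with h2 | h2
          -- `v x = M` and `v y = 0`
          · rw [h2] at hz hd; push_cast at hz hd
            have := approx_edge_lt hv hz (by push_cast; linarith)
            linarith
          · have := approx_sub_lt hv h1 h2 hz
            linarith
        · have hle := le_floor_of_lt hlt
          have h3 := lt_of_le_of_ne (Int.floor_le _) hd
          rw [← hc] at hle h3
          have hz : ∀ z ∈ Z, (z x : ℝ) - z y ≤ c := fun z hz => by
            have := hle _ (toZ z hz); simpa only [toPot] using this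
          have hc2 : c < M := by
            have : (c : ℝ) < (M : ℤ) := by push_cast; linarith
            exact_mod_cast this
          rcases hc1.eq_or_lt with h1 | h1
          · rw [← h1] at hz h3; push_cast at hz h3
            obtain ⟨e1, e2⟩ := approx_edge_ge hv hz
            have := e2 hy
            push_cast at this
            linarith
          · have := approx_sub_le hv h1 hc2 hz
            linarith
      · obtain ⟨c, hc⟩ : ∃ c, c = ⌊(M : ℝ) - v y⌋ := ⟨_, rfl⟩
        have hc0 : 0 ≤ c := by rw [hc]; exact Int.floor_nonneg.2 (by linarith)
        have hcf := Int.floor_le ((M : ℝ) - v y)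
        have hcf' := Int.lt_floor_add_one ((M : ℝ) - v y)
        rw [← hc] at hcf hcf'
        -- a strict bound slightly above `M - v y`
        obtain ⟨d, hd1, hd2⟩ := exists_between hcf'
        have hdc : ⌊d⌋ = c := Int.floor_eq_iff.2 ⟨by linarith, hd2⟩
        have hle := le_floor_of_lt (l := l) (i := some x) (j := some y) (d := d)
          (fun f hf => by
            have := hcon f hf (d + v y) (above_mem hx (by linarith)) _ (self_mem y)
            linarith)
        rw [hdc] at hle
        have hz : ∀ z ∈ Z, (z x : ℝ) - z y ≤ c := fun z hz => by
          have := hle _ (toZ z hz); simpa only [toPot] using this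
        rcases lt_or_ge c M with h2 | h2
        · have := approx_sub_le hv (by omega) h2 hz
          linarith
        -- `v y = 0`
        · have h2' : (M : ℝ) ≤ c := by exact_mod_cast h2
          have := approx_edge_le (x := x) (y := y) hv
            (fun z hz' => by have := hz z hz'; linarith) (by push_cast; linarith)
          linarith

lemma pair_mem {l : List (ZoneConstraint X)}
    (hZ : Z = {v | ∀ c ∈ l, ZoneConstraint.sat c v}) (hv : v ∈ approxZ M Z) (hne : Z.Nonempty)
    (i j : Option X) :
    ∃ f ∈ potZone l, f i ∈ target M v i ∧ f j ∈ target M v j := by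
  obtain ⟨f, hf, k, hk, k', hk', h⟩ := one_sided hZ hv hne i j
  obtain ⟨g, hg, m', hm', m, hm, h'⟩ := one_sided hZ hv hne j i
  -- the discrepancy between realised and allowed differences changes sign, hence vanishes
  obtain ⟨a, b, ha, hb, hab, he⟩ : ∃ a b : ℝ, 0 ≤ a ∧ 0 ≤ b ∧ a + b = 1 ∧
      a * (f i - f j - (k - k')) + b * (g i - g j - (m - m')) = 0 := by
    have hp : 0 ≤ f i - f j - (k - k') := by linarith
    have hq : g i - g j - (m - m') ≤ 0 := by linarith
    generalize f i - f j - (k - k') = p at hp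
    generalize g i - g j - (m - m') = q at hq
    rcases hp.eq_or_lt with rfl | hp
    · exact ⟨1, 0, by norm_num, le_rfl, by norm_num, by ring⟩
    · have : 0 < p - q := by linarith
      refine ⟨-q / (p - q), p / (p - q), div_nonneg (by linarith) this.le,
        div_nonneg hp.le this.le, ?_, ?_⟩ <;> field_simp <;> ring
  have h1 := target_convex M v i hk hm ha hb hab
  have h2 := target_convex M v j hk' hm' ha hb hab
  refine ⟨_, potZone_shift (potZone_convex l hf hg ha hb hab)
    (a * k + b * m - (a * f i + b * g i)), ?_, ?_⟩
  · convert h1 using 1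
    simp
  · convert h2 using 1
    simp
    linarith

end Separation

lemma approx_subset_closure {X : Type} {M : ℕ} {Z : Set (ClockVal X)} (hZ : IsZone Z) :
    approxZ M Z ⊆ closureR M Z := by
  classical
  intro v hv
  obtain ⟨l, hl⟩ := hZ
  have hne : Z.Nonempty := by
    by_contra hne
    rw [Set.not_nonempty_iff_eq_empty] at hne
    exact approx_mem (S := ∅) hv hne.subset (fun u hu => hu.elim) (fun u hu => hu.elim)
  have hpne : (potZone l).Nonempty := by
    obtain ⟨z, hz⟩ := hne
    exact ⟨_, toPot_mem l z (by simpa [hl] using hz)⟩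
  obtain ⟨f, hf, hfL⟩ := median_helly (target M v) (fun i => (target_convex M v i).ordConnected)
    (none :: (l.flatMap ZoneConstraint.clocks).map some) (potZone l) hpne
    (fun f hf g hg h hh => potZone_med hf hg hh) (pair_mem hl hv hne)
  have hf0 : f none = 0 := hfL none (by simp)
  -- clocks that no constraint mentions keep their value
  let w : ClockVal X := fun x =>
    if x ∈ l.flatMap ZoneConstraint.clocks then (f (some x)).toNNReal else v x
  have hw1 : ∀ x, x ∈ l.flatMap ZoneConstraint.clocks → (w x : ℝ) = f (some x) := by
    intro x hx
    have := hf.2 x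
    simp only [CmpOp.sat, hf0, Nat.cast_zero, sub_zero] at this
    simp only [w, if_pos hx]
    exact Real.coe_toNNReal _ this
  have hwt : ∀ x, (w x : ℝ) ∈ target M v (some x) := by
    intro x
    by_cases hx : x ∈ l.flatMap ZoneConstraint.clocks
    · rw [hw1 x hx]
      exact hfL _ (List.mem_cons_of_mem _ (List.mem_map_of_mem hx))
    · simp only [w, if_neg hx]
      exact ⟨fun _ => rfl, fun h => h⟩
  have hbig : ∀ x, (M : ℝ) < w x ↔ (M : ℝ) < v x := fun x =>
    ⟨fun h => by
      by_contra hc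
      rw [(hwt x).1 (not_lt.1 hc)] at h
      exact hc h, (hwt x).2⟩
  have heq : ∀ x, (w x : ℝ) ≤ M → (w x : ℝ) = v x := fun x h =>
    (hwt x).1 (not_lt.1 fun h' => absurd ((hbig x).2 h') (not_lt.2 h))
  refine ⟨w, ?_, fun x y => ⟨hbig x, fun h => by rw [heq x h], fun h => by rw [heq x h],
    fun h h' => by rw [heq x h, heq y h']⟩⟩
  rw [hl]
  intro c hc
  have hcl : ∀ x ∈ c.clocks, (w x : ℝ) = f (some x) := fun x hx =>
    hw1 x (List.mem_flatMap.2 ⟨c, hc, hx⟩)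
  have hs := hf.1 c hc
  cases c with
  | single x op n =>
    have e := hcl x (by simp [ZoneConstraint.clocks])
    simpa [ZoneConstraint.sat, ZoneConstraint.potSat, e, hf0] using hs
  | diff x y op n =>
    have e := hcl x (by simp [ZoneConstraint.clocks])
    have e' := hcl y (by simp [ZoneConstraint.clocks])
    simpa [ZoneConstraint.sat, ZoneConstraint.potSat, e, e'] using hs

/-- for every zone `Z`,
`Z ⊆ Closure^d_M(Z) ⊆ Approx_M(Z) ⊆ Closure_M(Z)`. -/
theorem abstraction_inclusions
    {Q X : Type} (A : TBA Q X) (M : ℕ) (hM : A.IsMaxConst M)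
    (Z : Set (ClockVal X)) (hZ : IsZone Z) :
    Z ⊆ closureD M Z ∧ closureD M Z ⊆ approxZ M Z ∧ approxZ M Z ⊆ closureR M Z := by
  refine ⟨fun v hv => ⟨v, hv, DRegEquiv.refl M v⟩, ?_, approx_subset_closure hZ⟩
  rintro v ⟨u, hu, huv⟩ S ⟨hZS, -, hS⟩
  exact hS u (hZS hu) v huv
end
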